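/- (Proposition 3) For every hybrid formula φ: the sequent ⊢ φ is provable in the calculus DS if and only if the disjunctive state P : φ is winning. -/

import Mathlib

/-- Hybrid logic formulas over nominals `ℕ` and propositional variables `ℕ`
(the two sorts are kept disjoint by the constructors). -/
inductive Form : Type where
  | prop : ℕ → Form
  | nom : ℕ → Form
  | rel : ℕ → ℕ → Form
  | and : Form → Form → Form
  | or : Form → Form → Form
  | imp : Form → Form → Form
  | neg : Form → Form
  | at_ : ℕ → Form → Form
  | box : Form → Form
  | dia : Form → Form

/-- A model for hybrid logic: a nonempty set of worlds, an accessibility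
relation, a valuation and an assignment of nominals to worlds. -/
structure Model where
  W : Type
  ne : Nonempty W
  R : W → W → Prop
  V : ℕ → W → Prop
  g : ℕ → W

/-- Satisfaction of a formula at a world of a model. -/
def sat (M : Model) : M.W → Form → Prop
  | w, .prop p => M.V p w
  | w, .nom i => M.g i = w
  | _, .rel i j => M.R (M.g i) (M.g j)
  | w, .and φ ψ => sat M w φ ∧ sat M w ψ
  | w, .or φ ψ => sat M w φ ∨ sat M w ψ
  | w, .imp φ ψ => ¬ sat M w φ ∨ sat M w ψ
  | w, .neg φ => ¬ sat M w φ
  | _, .at_ i φ => sat M (M.g i) φ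
  | w, .box φ => ∀ v, M.R w v → sat M v φ
  | w, .dia φ => ∃ v, M.R w v ∧ sat M v φ

/-- A model is named iff every world has a name, i.e. the assignment is surjective. -/
def Model.Named (M : Model) : Prop := Function.Surjective M.g

/-- A formula is valid iff it is true at every world of every model. -/
def Valid (φ : Form) : Prop := ∀ (M : Model) (w : M.W), sat M w φ

/-- Roles: `pro` means I am the proponent (`P`), `opp` that I am the opponent (`O`). -/
inductive Role : Type where
  | pro : Role
  | opp : Role

/-- Role switch. -/
def Role.swap : Role → Role
  | .pro => .opp
  | .opp => .pro

/-- Game states of the semantic game over a named model, with worlds referred to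
by their names: `loc r i φ` is `Q, i : φ` and `glob r φ` is `Q : φ`. -/
inductive NState : Type where
  | loc : Role → ℕ → Form → NState
  | glob : Role → Form → NState

/-- Elementary formulas: `p`, `i`, `R(i,j)`. -/
def Form.elem : Form → Prop
  | .prop _ => True
  | .nom _ => True
  | .rel _ _ => True
  | _ => False

/-- Elementary game states: states `Q, i : φ` with `φ` elementary (these are the
leaves of the semantic game over named models). -/
def NState.elem : NState → Prop
  | .loc _ _ φ => φ.elem
  | .glob _ _ => False

/-- States labelled "I" (where it is My choice); all other non-leaf states are labelled "Y". -/
def NState.myTurn : NState → Prop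
  | .loc .pro _ (.or _ _) => True
  | .loc .pro _ (.imp _ _) => True
  | .loc .pro _ (.neg _) => True
  | .loc .pro _ (.at_ _ _) => True
  | .loc .pro _ (.dia _) => True
  | .loc .opp _ (.and _ _) => True
  | .loc .opp _ (.box _) => True
  | .glob .opp _ => True
  | _ => False

/-- The (model-independent) child relation of the semantic game over named models,
using the reformulated rules `(R_□)`, `(R_◇)` and `(R_U)`:
`NChild s t` says that `t` is a child of `s` in the game tree. -/
inductive NChild : NState → NState → Prop where
  | orL (r i φ ψ) : NChild (.loc r i (.or φ ψ)) (.loc r i φ)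
  | orR (r i φ ψ) : NChild (.loc r i (.or φ ψ)) (.loc r i ψ)
  | andL (r i φ ψ) : NChild (.loc r i (.and φ ψ)) (.loc r i φ)
  | andR (r i φ ψ) : NChild (.loc r i (.and φ ψ)) (.loc r i ψ)
  | impL (r i φ ψ) : NChild (.loc r i (.imp φ ψ)) (.loc r.swap i φ)
  | impR (r i φ ψ) : NChild (.loc r i (.imp φ ψ)) (.loc r i ψ)
  | neg (r i φ) : NChild (.loc r i (.neg φ)) (.loc r.swap i φ)
  | at_ (r i j φ) : NChild (.loc r i (.at_ j φ)) (.loc r j φ)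
  | box (r i φ) (j : ℕ) : NChild (.loc r i (.box φ)) (.loc r j (.or (.neg (.rel i j)) φ))
  | dia (r i φ) (j : ℕ) : NChild (.loc r i (.dia φ)) (.loc r j (.and (.rel i j) φ))
  | glob (r φ) (i : ℕ) : NChild (.glob r φ) (.loc r i φ)

/-- The label of an elementary leaf state in the game over the model `M`:
"I" iff the corresponding elementary claim is correct. -/
def elemIWin (M : Model) : NState → Prop
  | .loc .pro i φ => sat M (M.g i) φ
  | .loc .opp i φ => ¬ sat M (M.g i) φ
  | .glob _ _ => False

/-- I have a winning strategy for the semantic game `G(M, s)` over a named model: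
at "I"-nodes I keep one child, at "Y"-nodes all children, and all leaves are labelled "I". -/
inductive IWinsN (M : Model) : NState → Prop where
  | leaf {s} : s.elem → elemIWin M s → IWinsN M s
  | move {s t} : s.myTurn → NChild s t → IWinsN M t → IWinsN M s
  | resp {s} : ¬ s.myTurn → ¬ s.elem → (∀ t, NChild s t → IWinsN M t) → IWinsN M s

/-- You have a winning strategy for the semantic game `G(M, s)` over a named model:
at "Y"-nodes You keep one child, at "I"-nodes all children, and all leaves are labelled "Y". -/
inductive YWinsN (M : Model) : NState → Prop where
  | leaf {s} : s.elem → ¬ elemIWin M s → YWinsN M s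
  | move {s t} : ¬ s.myTurn → NChild s t → YWinsN M t → YWinsN M s
  | resp {s} : s.myTurn → (∀ t, NChild s t → YWinsN M t) → YWinsN M s

/-- A disjunctive state: a finite multiset of game states. -/
abbrev DState : Type := Multiset NState

/-- A disjunctive state is elementary iff all its game states are. -/
def DElem (D : DState) : Prop := ∀ s ∈ D, s.elem

/-- A regulation function maps every non-elementary disjunctive state to one of
its non-elementary game states. -/
def IsRegulation (ρ : DState → NState) : Prop :=
  ∀ D : DState, ¬ DElem D → ρ D ∈ D ∧ ¬ (ρ D).elem

/-- `D` is game valid: for every named model `M` there is a member of `D` for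
which I have a winning strategy in the semantic game over `M`. -/
def GameValid (D : DState) : Prop :=
  ∀ M : Model, M.Named → ∃ s ∈ D, IWinsN M s

/-- I have a winning strategy for the disjunctive game `DG(D, ρ)`.
At the state `g ⋁ D` with `ρ (g ⋁ D) = g`: if `g` is labelled "I", I either move in `g`
or duplicate `g`; if `g` is labelled "Y", You move in `g` and I must win after every move.
An elementary disjunctive state is a leaf labelled "I" (winning for Me) iff for every named
model some member of it is a leaf labelled "I" of the semantic game over that model.
Since winning strategies are wellfounded trees, infinite plays are not winning for Me. -/
inductive DWins (ρ : DState → NState) : DState → Prop where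
  | leaf {D : DState} : DElem D → (∀ M : Model, M.Named → ∃ s ∈ D, IWinsN M s) →
      DWins ρ D
  | movI {D : DState} {g g' : NState} : ρ (g ::ₘ D) = g → g.myTurn → NChild g g' →
      DWins ρ (g' ::ₘ D) → DWins ρ (g ::ₘ D)
  | dup {D : DState} {g : NState} : ρ (g ::ₘ D) = g → g.myTurn →
      DWins ρ (g ::ₘ g ::ₘ D) → DWins ρ (g ::ₘ D)
  | movY {D : DState} {g : NState} : ρ (g ::ₘ D) = g → ¬ g.myTurn → ¬ g.elem →
      (∀ g', NChild g g' → DWins ρ (g' ::ₘ D)) → DWins ρ (g ::ₘ D)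

/-- `D` is winning: there is a regulation `ρ` such that I have a winning strategy
for `DG(D, ρ)`. -/
def Winning (D : DState) : Prop :=
  ∃ ρ : DState → NState, IsRegulation ρ ∧ DWins ρ D

/-- `Form.occurs k φ`: the nominal `k` occurs in the formula `φ`. -/
def Form.occurs (k : ℕ) : Form → Prop
  | .prop _ => False
  | .nom i => i = k
  | .rel i j => i = k ∨ j = k
  | .and φ ψ => φ.occurs k ∨ ψ.occurs k
  | .or φ ψ => φ.occurs k ∨ ψ.occurs k
  | .imp φ ψ => φ.occurs k ∨ ψ.occurs k
  | .neg φ => φ.occurs k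
  | .at_ i φ => i = k ∨ φ.occurs k
  | .box φ => φ.occurs k
  | .dia φ => φ.occurs k

/-- A nominal occurs in a game state iff it occurs as its label or in its formula. -/
def NState.occurs (k : ℕ) : NState → Prop
  | .loc _ i φ => i = k ∨ φ.occurs k
  | .glob _ φ => φ.occurs k

/-- A nominal occurs in a disjunctive state iff it occurs in one of its game states. -/
def DOccurs (k : ℕ) (D : DState) : Prop := ∃ s ∈ D, s.occurs k

/-- Labelled formulas `i : φ` and plain (unlabelled) formulas. -/
inductive LForm : Type where
  | lab : ℕ → Form → LForm
  | plain : Form → LForm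

/-- Elementary formulas: `p`, `i`, `R(i,j)`. -/
def Form.elemF : Form → Prop
  | .prop _ => True
  | .nom _ => True
  | .rel _ _ => True
  | _ => False

/-- Elementary members of a sequent: labelled elementary formulas. -/
def LForm.elemL : LForm → Prop
  | .lab _ φ => φ.elemF
  | .plain _ => False

/-- `Form.occursF k φ`: the nominal `k` occurs in the formula `φ`. -/
def Form.occursF (k : ℕ) : Form → Prop
  | .prop _ => False
  | .nom i => i = k
  | .rel i j => i = k ∨ j = k
  | .and φ ψ => φ.occursF k ∨ ψ.occursF k
  | .or φ ψ => φ.occursF k ∨ ψ.occursF k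
  | .imp φ ψ => φ.occursF k ∨ ψ.occursF k
  | .neg φ => φ.occursF k
  | .at_ i φ => i = k ∨ φ.occursF k
  | .box φ => φ.occursF k
  | .dia φ => φ.occursF k

/-- A nominal occurs in a (labelled) formula. -/
def LForm.occursL (k : ℕ) : LForm → Prop
  | .lab i φ => i = k ∨ φ.occursF k
  | .plain φ => φ.occursF k

/-- The sequent `Γ ⊢ Δ` is (game) valid: for every named model, some labelled formula
of `Δ` is true at (the world named by) its label, or some labelled formula of `Γ` is
false at its label. -/
def SeqValid (Γ Δ : Multiset LForm) : Prop :=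
  ∀ M : Model, M.Named →
    (∃ i φ, LForm.lab i φ ∈ Δ ∧ sat M (M.g i) φ) ∨
    (∃ i φ, LForm.lab i φ ∈ Γ ∧ ¬ sat M (M.g i) φ)

/-- The sequent calculus `DS`. `DS Γ Δ` means that `Γ ⊢ Δ` is provable. -/
inductive DS : Multiset LForm → Multiset LForm → Prop where
  | V {Γ Δ} : (∀ f ∈ Γ, LForm.elemL f) → (∀ f ∈ Δ, LForm.elemL f) → SeqValid Γ Δ →
      DS Γ Δ
  | CL {Γ Δ i φ} : DS (.lab i φ ::ₘ .lab i φ ::ₘ Γ) Δ → DS (.lab i φ ::ₘ Γ) Δ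
  | CR {Γ Δ i φ} : DS Γ (.lab i φ ::ₘ .lab i φ ::ₘ Δ) → DS Γ (.lab i φ ::ₘ Δ)
  | U {i φ} : ¬ Form.occursF i φ → DS 0 {LForm.lab i φ} → DS 0 {LForm.plain φ}
  | Lor {Γ Δ i φ ψ} : DS (.lab i φ ::ₘ Γ) Δ → DS (.lab i ψ ::ₘ Γ) Δ →
      DS (.lab i (.or φ ψ) ::ₘ Γ) Δ
  | Ror1 {Γ Δ i φ ψ} : DS Γ (.lab i φ ::ₘ Δ) → DS Γ (.lab i (.or φ ψ) ::ₘ Δ)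
  | Ror2 {Γ Δ i φ ψ} : DS Γ (.lab i ψ ::ₘ Δ) → DS Γ (.lab i (.or φ ψ) ::ₘ Δ)
  | Land1 {Γ Δ i φ ψ} : DS (.lab i φ ::ₘ Γ) Δ → DS (.lab i (.and φ ψ) ::ₘ Γ) Δ
  | Land2 {Γ Δ i φ ψ} : DS (.lab i ψ ::ₘ Γ) Δ → DS (.lab i (.and φ ψ) ::ₘ Γ) Δ
  | Rand {Γ Δ i φ ψ} : DS Γ (.lab i φ ::ₘ Δ) → DS Γ (.lab i ψ ::ₘ Δ) →
      DS Γ (.lab i (.and φ ψ) ::ₘ Δ)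
  | Limp {Γ Δ i φ ψ} : DS Γ (.lab i φ ::ₘ Δ) → DS (.lab i ψ ::ₘ Γ) Δ →
      DS (.lab i (.imp φ ψ) ::ₘ Γ) Δ
  | Rimp1 {Γ Δ i φ ψ} : DS (.lab i φ ::ₘ Γ) Δ → DS Γ (.lab i (.imp φ ψ) ::ₘ Δ)
  | Rimp2 {Γ Δ i φ ψ} : DS Γ (.lab i ψ ::ₘ Δ) → DS Γ (.lab i (.imp φ ψ) ::ₘ Δ)
  | Lneg {Γ Δ i φ} : DS Γ (.lab i φ ::ₘ Δ) → DS (.lab i (.neg φ) ::ₘ Γ) Δ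
  | Rneg {Γ Δ i φ} : DS (.lab i φ ::ₘ Γ) Δ → DS Γ (.lab i (.neg φ) ::ₘ Δ)
  | Lat {Γ Δ i j φ} : DS (.lab j φ ::ₘ Γ) Δ → DS (.lab i (.at_ j φ) ::ₘ Γ) Δ
  | Rat {Γ Δ i j φ} : DS Γ (.lab j φ ::ₘ Δ) → DS Γ (.lab i (.at_ j φ) ::ₘ Δ)
  | Lbox {Γ Δ i j φ} : DS (.lab j (.or (.neg (.rel i j)) φ) ::ₘ Γ) Δ →
      DS (.lab i (.box φ) ::ₘ Γ) Δ
  | Rbox {Γ Δ i j φ} : (∀ f ∈ Γ, ¬ LForm.occursL j f) → (∀ f ∈ Δ, ¬ LForm.occursL j f) →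
      j ≠ i → ¬ Form.occursF j φ →
      DS Γ (.lab j (.or (.neg (.rel i j)) φ) ::ₘ Δ) → DS Γ (.lab i (.box φ) ::ₘ Δ)
  | Ldia {Γ Δ i j φ} : (∀ f ∈ Γ, ¬ LForm.occursL j f) → (∀ f ∈ Δ, ¬ LForm.occursL j f) →
      j ≠ i → ¬ Form.occursF j φ →
      DS (.lab j (.and (.rel i j) φ) ::ₘ Γ) Δ → DS (.lab i (.dia φ) ::ₘ Γ) Δ
  | Rdia {Γ Δ i j φ} : DS Γ (.lab j (.and (.rel i j) φ) ::ₘ Δ) →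
      DS Γ (.lab i (.dia φ) ::ₘ Δ)


/-- Renaming of nominals. -/
def Form.ren (σ : ℕ → ℕ) : Form → Form
  | .prop p => .prop p
  | .nom i => .nom (σ i)
  | .rel i j => .rel (σ i) (σ j)
  | .and φ ψ => .and (φ.ren σ) (ψ.ren σ)
  | .or φ ψ => .or (φ.ren σ) (ψ.ren σ)
  | .imp φ ψ => .imp (φ.ren σ) (ψ.ren σ)
  | .neg φ => .neg (φ.ren σ)
  | .at_ i φ => .at_ (σ i) (φ.ren σ)
  | .box φ => .box (φ.ren σ)
  | .dia φ => .dia (φ.ren σ)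

theorem ren_congr (σ τ : ℕ → ℕ) (φ : Form) (h : ∀ k, Form.occursF k φ → σ k = τ k) :
    φ.ren σ = φ.ren τ := by
  induction φ <;> simp_all [Form.ren, Form.occursF]

/-- Translation of sequent members. -/
def trL (r : Role) (σ : ℕ → ℕ) : LForm → NState
  | .lab i φ => .loc r (σ i) (φ.ren σ)
  | .plain φ => .glob r (φ.ren σ)

theorem trL_congr (r : Role) (σ τ : ℕ → ℕ) (f : LForm) (h : ∀ k, LForm.occursL k f → σ k = τ k) :
    trL r σ f = trL r τ f := by
  cases f with
  | lab i φ =>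
    simp only [trL]
    rw [h i (Or.inl rfl), ren_congr σ τ φ (fun k hk => h k (Or.inr hk))]
  | plain φ =>
    simp only [trL]
    rw [ren_congr σ τ φ (fun k hk => h k hk)]

/-- Translation of sequents. -/
def trS (σ : ℕ → ℕ) (Γ Δ : Multiset LForm) : DState :=
  Γ.map (trL .opp σ) + Δ.map (trL .pro σ)

theorem trS_congr (σ τ : ℕ → ℕ) (Γ Δ : Multiset LForm)
    (h : ∀ f ∈ Γ, ∀ k, LForm.occursL k f → σ k = τ k)
    (h' : ∀ f ∈ Δ, ∀ k, LForm.occursL k f → σ k = τ k) :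
    trS σ Γ Δ = trS τ Γ Δ := by
  unfold trS
  rw [Multiset.map_congr rfl (fun f hf => trL_congr .opp σ τ f (h f hf)),
    Multiset.map_congr rfl (fun f hf => trL_congr .pro σ τ f (h' f hf))]

theorem trS_consL (σ : ℕ → ℕ) (Γ Δ : Multiset LForm) (f : LForm) :
    trS σ (f ::ₘ Γ) Δ = trL .opp σ f ::ₘ trS σ Γ Δ := by
  simp [trS]

theorem trS_consR (σ : ℕ → ℕ) (Γ Δ : Multiset LForm) (f : LForm) :
    trS σ Γ (f ::ₘ Δ) = trL .pro σ f ::ₘ trS σ Γ Δ := by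
  simp [trS]

theorem elem_not_my {g : NState} (h : g.elem) : ¬ g.myTurn := by
  rcases g with ⟨r, i, φ⟩ | ⟨r, φ⟩
  · cases φ <;> simp_all [NState.elem, Form.elem] <;> cases r <;> simp [NState.myTurn]
  · simp [NState.elem] at h

/-- The game without a regulation. -/
inductive WW : DState → Prop where
  | leaf {D : DState} : DElem D → (∀ M : Model, M.Named → ∃ s ∈ D, IWinsN M s) → WW D
  | movI {D : DState} {g g' : NState} : g.myTurn → NChild g g' → WW (g' ::ₘ D) → WW (g ::ₘ D)
  | dup {D : DState} {g : NState} : g.myTurn → WW (g ::ₘ g ::ₘ D) → WW (g ::ₘ D)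
  | movY {D : DState} {g : NState} : ¬ g.myTurn → ¬ g.elem →
      (∀ g', NChild g g' → WW (g' ::ₘ D)) → WW (g ::ₘ D)

theorem WW.inv {E : DState} (h : WW E) : ∀ (g : NState) (D : DState), E = g ::ₘ D →
    ¬ g.myTurn → ¬ g.elem → ∀ g', NChild g g' → WW (g' ::ₘ D) := by
  induction h with
  | leaf h1 h2 =>
    intro g D e hm he
    exact absurd (h1 g (by simp [e])) he
  | @movI D0 h h' hm hc _ ih =>
    intro g D e hgm hge g' hg'
    rcases Multiset.cons_eq_cons.1 e with ⟨rfl, _⟩ | ⟨_, C, rfl, rfl⟩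
    · exact absurd hm hgm
    · rw [Multiset.cons_swap]
      refine WW.movI hm hc ?_
      rw [Multiset.cons_swap]
      exact ih g (h' ::ₘ C) (Multiset.cons_swap _ _ _) hgm hge g' hg'
  | @dup D0 h hm _ ih =>
    intro g D e hgm hge g' hg'
    rcases Multiset.cons_eq_cons.1 e with ⟨rfl, _⟩ | ⟨_, C, rfl, rfl⟩
    · exact absurd hm hgm
    · rw [Multiset.cons_swap]
      refine WW.dup hm ?_
      rw [Multiset.cons_swap h g', Multiset.cons_swap h g']
      exact ih g (h ::ₘ h ::ₘ C)
        (by rw [Multiset.cons_swap h g, Multiset.cons_swap h g]) hgm hge g' hg'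
  | @movY D0 h hm he hall ih =>
    intro g D e hgm hge g' hg'
    rcases Multiset.cons_eq_cons.1 e with ⟨rfl, rfl⟩ | ⟨_, C, rfl, rfl⟩
    · exact hall g' hg'
    · rw [Multiset.cons_swap]
      refine WW.movY hm he ?_
      intro h' hh'
      rw [Multiset.cons_swap]
      exact ih h' hh' g (h' ::ₘ C) (Multiset.cons_swap _ _ _) hgm hge g' hg'

theorem cons_aux {h g : NState} {D0 D : DState} (hne : h ≠ g) (e : h ::ₘ D0 = g ::ₘ g ::ₘ D) :
    ∃ C, D = h ::ₘ C ∧ D0 = g ::ₘ g ::ₘ C := by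
  rcases Multiset.cons_eq_cons.1 e with ⟨rfl, _⟩ | ⟨_, C, rfl, e2⟩
  · exact absurd rfl hne
  · rcases Multiset.cons_eq_cons.1 e2 with ⟨rfl, _⟩ | ⟨_, C', rfl, rfl⟩
    · exact absurd rfl hne
    · exact ⟨C', rfl, rfl⟩

theorem WW.contr_elem {E : DState} (h : WW E) : ∀ (g : NState) (D : DState), E = g ::ₘ g ::ₘ D →
    g.elem → WW (g ::ₘ D) := by
  induction h with
  | leaf h1 h2 =>
    intro g D e he
    subst e
    refine WW.leaf (fun s hs => h1 s (Multiset.mem_cons_of_mem hs)) (fun M hM => ?_)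
    obtain ⟨s, hs, hw⟩ := h2 M hM
    exact ⟨s, by simpa using hs, hw⟩
  | @movI D0 h h' hm hc _ ih =>
    intro g D e he
    obtain ⟨C, rfl, rfl⟩ := cons_aux (by rintro rfl; exact elem_not_my he hm) e
    rw [Multiset.cons_swap]
    refine WW.movI hm hc ?_
    rw [Multiset.cons_swap]
    exact ih g (h' ::ₘ C) (by rw [Multiset.cons_swap h' g, Multiset.cons_swap h' g]) he
  | @dup D0 h hm _ ih =>
    intro g D e he
    obtain ⟨C, rfl, rfl⟩ := cons_aux (by rintro rfl; exact elem_not_my he hm) e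
    rw [Multiset.cons_swap]
    refine WW.dup hm ?_
    rw [Multiset.cons_swap h g, Multiset.cons_swap h g]
    refine ih g (h ::ₘ h ::ₘ C) ?_ he
    simp only [← Multiset.singleton_add]
    abel
  | @movY D0 h hm hne hall ih =>
    intro g D e he
    obtain ⟨C, rfl, rfl⟩ := cons_aux (by rintro rfl; exact hne he) e
    rw [Multiset.cons_swap]
    refine WW.movY hm hne ?_
    intro h' hh'
    rw [Multiset.cons_swap]
    exact ih h' hh' g (h' ::ₘ C) (by rw [Multiset.cons_swap h' g, Multiset.cons_swap h' g]) he

/-- Contraction is admissible for the state. -/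
def Contr (g : NState) : Prop := ∀ D, WW (g ::ₘ g ::ₘ D) → WW (g ::ₘ D)

theorem contr_my {g : NState} (h : g.myTurn) : Contr g := fun _ hw => WW.dup h hw

theorem contr_elem {g : NState} (h : g.elem) : Contr g := fun D hw => hw.contr_elem g D rfl h

theorem contr_step {g : NState} (h : ∀ g', NChild g g' → Contr g') : Contr g := by
  by_cases hm : g.myTurn
  · exact contr_my hm
  by_cases he : g.elem
  · exact contr_elem he
  intro D hw
  refine WW.movY hm he (fun g' hg' => h g' hg' D ?_)
  have h1 := hw.inv g (g ::ₘ D) rfl hm he g' hg'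
  rw [Multiset.cons_swap] at h1
  exact h1.inv g (g' ::ₘ D) rfl hm he g' hg'

theorem contr_loc (φ : Form) : ∀ r i, Contr (.loc r i φ) := by
  induction φ with
  | prop p => intro r i; exact contr_elem trivial
  | nom p => intro r i; exact contr_elem trivial
  | rel p q => intro r i; exact contr_elem trivial
  | and φ ψ ih1 ih2 =>
    intro r i; apply contr_step; intro g' hg'; cases hg'
    · exact ih1 _ _
    · exact ih2 _ _
  | or φ ψ ih1 ih2 =>
    intro r i; apply contr_step; intro g' hg'; cases hg'
    · exact ih1 _ _
    · exact ih2 _ _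
  | imp φ ψ ih1 ih2 =>
    intro r i; apply contr_step; intro g' hg'; cases hg'
    · exact ih1 _ _
    · exact ih2 _ _
  | neg φ ih => intro r i; apply contr_step; intro g' hg'; cases hg'; exact ih _ _
  | at_ j φ ih => intro r i; apply contr_step; intro g' hg'; cases hg'; exact ih _ _
  | box φ ih =>
    intro r i
    cases r
    · apply contr_step; intro g' hg'; cases hg'; exact contr_my trivial
    · exact contr_my trivial
  | dia φ ih =>
    intro r i
    cases r
    · exact contr_my trivial
    · apply contr_step; intro g' hg'; cases hg'; exact contr_my trivial

/-- The submodel generated by renamed nominals. -/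
def subM (M : Model) (σ : ℕ → ℕ) : Model where
  W := Set.range (fun i => M.g (σ i))
  ne := ⟨⟨M.g (σ 0), 0, rfl⟩⟩
  R := fun a b => M.R a.1 b.1
  V := fun p a => M.V p a.1
  g := fun i => ⟨M.g (σ i), i, rfl⟩

theorem subM_named (M : Model) (σ : ℕ → ℕ) : (subM M σ).Named := by
  rintro ⟨_, i, rfl⟩
  exact ⟨i, rfl⟩

theorem subM_sat (M : Model) (σ : ℕ → ℕ) (i : ℕ) (φ : Form) (h : φ.elemF) :
    sat (subM M σ) ((subM M σ).g i) φ ↔ sat M (M.g (σ i)) (φ.ren σ) := by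
  cases φ with
  | nom k => exact Subtype.ext_iff
  | _ => simp_all [Form.elemF, sat, Form.ren, subM]

theorem elem_ren {φ : Form} (σ : ℕ → ℕ) (h : φ.elemF) : (φ.ren σ).elem := by
  cases φ <;> simp_all [Form.elemF, Form.ren, Form.elem]

theorem trL_elem {f : LForm} (r : Role) (σ : ℕ → ℕ) (h : f.elemL) : (trL r σ f).elem := by
  cases f with
  | lab i φ => exact elem_ren σ h
  | plain φ => exact h.elim

theorem V_case {Γ Δ : Multiset LForm} (h1 : ∀ f ∈ Γ, LForm.elemL f)
    (h2 : ∀ f ∈ Δ, LForm.elemL f) (h : SeqValid Γ Δ) (σ : ℕ → ℕ) : WW (trS σ Γ Δ) := by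
  refine WW.leaf ?_ ?_
  · intro s hs
    simp only [trS, Multiset.mem_add, Multiset.mem_map] at hs
    rcases hs with ⟨f, hf, rfl⟩ | ⟨f, hf, rfl⟩
    · exact trL_elem _ _ (h1 f hf)
    · exact trL_elem _ _ (h2 f hf)
  · intro M _
    rcases h (subM M σ) (subM_named M σ) with ⟨i, φ, hm, hs⟩ | ⟨i, φ, hm, hs⟩
    · refine ⟨trL .pro σ (.lab i φ), ?_, IWinsN.leaf (trL_elem _ _ (h2 _ hm)) ?_⟩
      · exact Multiset.mem_add.2 (Or.inr (Multiset.mem_map_of_mem _ hm))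
      · exact (subM_sat M σ i φ (h2 _ hm)).1 hs
    · refine ⟨trL .opp σ (.lab i φ), ?_, IWinsN.leaf (trL_elem _ _ (h1 _ hm)) ?_⟩
      · exact Multiset.mem_add.2 (Or.inl (Multiset.mem_map_of_mem _ hm))
      · exact fun hc => hs ((subM_sat M σ i φ (h1 _ hm)).2 hc)

theorem upd_ne {σ : ℕ → ℕ} {j k : ℕ} {P : ℕ → Prop} (h : ¬ P j) :
    ∀ m, P m → Function.update σ j k m = σ m := by
  intro m hm
  apply Function.update_of_ne
  rintro rfl
  exact h hm

theorem DS_to_WW {Γ Δ : Multiset LForm} (h : DS Γ Δ) : ∀ σ, WW (trS σ Γ Δ) := by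
  induction h with
  | V h1 h2 h3 => exact V_case h1 h2 h3
  | CL _ ih =>
    intro σ; have := ih σ; simp only [trS_consL] at this ⊢; exact contr_loc _ _ _ _ this
  | CR _ ih =>
    intro σ; have := ih σ; simp only [trS_consR] at this ⊢; exact contr_loc _ _ _ _ this
  | @U i φ hn _ ih =>
    intro σ
    have e : trS σ 0 {LForm.plain φ} = NState.glob .pro (φ.ren σ) ::ₘ 0 := by simp [trS, trL]
    rw [e]
    refine WW.movY (by simp [NState.myTurn]) (by simp [NState.elem]) ?_
    intro g' hg'
    cases hg' with
    | glob _ _ k =>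
    have := ih (Function.update σ i k)
    simpa [trS, trL, ren_congr _ σ φ (upd_ne (k := k) hn)] using this
  | Lor _ _ ih1 ih2 =>
    intro σ
    have h1 := ih1 σ; have h2 := ih2 σ
    simp only [trS_consL, trS_consR, trL, Form.ren] at h1 h2 ⊢
    refine WW.movY (by simp [NState.myTurn]) (by simp [NState.elem, Form.elem]) ?_
    intro g' hg'
    cases hg' <;> assumption
  | Ror1 _ ih =>
    intro σ
    have h1 := ih σ
    simp only [trS_consL, trS_consR, trL, Form.ren] at h1 ⊢
    exact WW.movI (by simp [NState.myTurn]) (NChild.orL _ _ _ _) h1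
  | Ror2 _ ih =>
    intro σ
    have h1 := ih σ
    simp only [trS_consL, trS_consR, trL, Form.ren] at h1 ⊢
    exact WW.movI (by simp [NState.myTurn]) (NChild.orR _ _ _ _) h1
  | Land1 _ ih =>
    intro σ
    have h1 := ih σ
    simp only [trS_consL, trS_consR, trL, Form.ren] at h1 ⊢
    exact WW.movI (by simp [NState.myTurn]) (NChild.andL _ _ _ _) h1
  | Land2 _ ih =>
    intro σ
    have h1 := ih σ
    simp only [trS_consL, trS_consR, trL, Form.ren] at h1 ⊢
    exact WW.movI (by simp [NState.myTurn]) (NChild.andR _ _ _ _) h1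
  | Rand _ _ ih1 ih2 =>
    intro σ
    have h1 := ih1 σ; have h2 := ih2 σ
    simp only [trS_consL, trS_consR, trL, Form.ren] at h1 h2 ⊢
    refine WW.movY (by simp [NState.myTurn]) (by simp [NState.elem, Form.elem]) ?_
    intro g' hg'
    cases hg' <;> assumption
  | Limp _ _ ih1 ih2 =>
    intro σ
    have h1 := ih1 σ; have h2 := ih2 σ
    simp only [trS_consL, trS_consR, trL, Form.ren] at h1 h2 ⊢
    refine WW.movY (by simp [NState.myTurn]) (by simp [NState.elem, Form.elem]) ?_
    intro g' hg'
    cases hg' <;> assumption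
  | Rimp1 _ ih =>
    intro σ
    have h1 := ih σ
    simp only [trS_consL, trS_consR, trL, Form.ren] at h1 ⊢
    exact WW.movI (by simp [NState.myTurn]) (NChild.impL _ _ _ _) h1
  | Rimp2 _ ih =>
    intro σ
    have h1 := ih σ
    simp only [trS_consL, trS_consR, trL, Form.ren] at h1 ⊢
    exact WW.movI (by simp [NState.myTurn]) (NChild.impR _ _ _ _) h1
  | Lneg _ ih =>
    intro σ
    have h1 := ih σ
    simp only [trS_consL, trS_consR, trL, Form.ren] at h1 ⊢
    refine WW.movY (by simp [NState.myTurn]) (by simp [NState.elem, Form.elem]) ?_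
    intro g' hg'
    cases hg' <;> assumption
  | Rneg _ ih =>
    intro σ
    have h1 := ih σ
    simp only [trS_consL, trS_consR, trL, Form.ren] at h1 ⊢
    exact WW.movI (by simp [NState.myTurn]) (NChild.neg _ _ _) h1
  | Lat _ ih =>
    intro σ
    have h1 := ih σ
    simp only [trS_consL, trS_consR, trL, Form.ren] at h1 ⊢
    refine WW.movY (by simp [NState.myTurn]) (by simp [NState.elem, Form.elem]) ?_
    intro g' hg'
    cases hg' <;> assumption
  | Rat _ ih =>
    intro σ
    have h1 := ih σ
    simp only [trS_consL, trS_consR, trL, Form.ren] at h1 ⊢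
    exact WW.movI (by simp [NState.myTurn]) (NChild.at_ _ _ _ _) h1
  | Lbox _ ih =>
    intro σ
    have h1 := ih σ
    simp only [trS_consL, trS_consR, trL, Form.ren] at h1 ⊢
    exact WW.movI (by simp [NState.myTurn]) (NChild.box _ _ _ _) h1
  | @Rbox Γ Δ i j φ hΓ hΔ hij hφ _ ih =>
    intro σ
    simp only [trS_consR, trL, Form.ren]
    refine WW.movY (by simp [NState.myTurn]) (by simp [NState.elem, Form.elem]) ?_
    intro g' hg'
    cases hg' with
    | box _ _ _ k =>
    have h1 := ih (Function.update σ j k)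
    simp only [trS_consR, trL, Form.ren, Function.update_self, Function.update_of_ne hij.symm,
      ren_congr _ σ φ (upd_ne (k := k) hφ)] at h1
    rwa [trS_congr _ σ Γ Δ (fun f hf => upd_ne (P := fun m => LForm.occursL m f) (hΓ f hf))
      (fun f hf => upd_ne (P := fun m => LForm.occursL m f) (hΔ f hf))] at h1
  | @Ldia Γ Δ i j φ hΓ hΔ hij hφ _ ih =>
    intro σ
    simp only [trS_consL, trL, Form.ren]
    refine WW.movY (by simp [NState.myTurn]) (by simp [NState.elem, Form.elem]) ?_
    intro g' hg'
    cases hg' with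
    | dia _ _ _ k =>
    have h1 := ih (Function.update σ j k)
    simp only [trS_consL, trL, Form.ren, Function.update_self, Function.update_of_ne hij.symm,
      ren_congr _ σ φ (upd_ne (k := k) hφ)] at h1
    rwa [trS_congr _ σ Γ Δ (fun f hf => upd_ne (P := fun m => LForm.occursL m f) (hΓ f hf))
      (fun f hf => upd_ne (P := fun m => LForm.occursL m f) (hΔ f hf))] at h1
  | Rdia _ ih =>
    intro σ
    have h1 := ih σ
    simp only [trS_consL, trS_consR, trL, Form.ren] at h1 ⊢
    exact WW.movI (by simp [NState.myTurn]) (NChild.dia _ _ _ _) h1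

/-- Ranked version. -/
inductive WR : Ordinal.{0} → DState → Prop where
  | leaf {α} {D : DState} : DElem D → (∀ M : Model, M.Named → ∃ s ∈ D, IWinsN M s) → WR α D
  | movI {α β} {D : DState} {g g' : NState} : β < α → g.myTurn → NChild g g' →
      WR β (g' ::ₘ D) → WR α (g ::ₘ D)
  | dup {α β} {D : DState} {g : NState} : β < α → g.myTurn → WR β (g ::ₘ g ::ₘ D) →
      WR α (g ::ₘ D)
  | movY {α} {D : DState} {g : NState} (β : NState → Ordinal.{0}) : ¬ g.myTurn → ¬ g.elem →
      (∀ g', β g' < α) →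
      (∀ g', NChild g g' → WR (β g') (g' ::ₘ D)) → WR α (g ::ₘ D)

theorem WW.toWR {D : DState} (h : WW D) : ∃ α, WR α D := by
  induction h with
  | leaf h1 h2 => exact ⟨0, WR.leaf h1 h2⟩
  | movI hm hc _ ih =>
    obtain ⟨β, hβ⟩ := ih
    exact ⟨Order.succ β, WR.movI (Order.lt_succ β) hm hc hβ⟩
  | dup hm _ ih =>
    obtain ⟨β, hβ⟩ := ih
    exact ⟨Order.succ β, WR.dup (Order.lt_succ β) hm hβ⟩
  | @movY D g hm he _ ih =>
    have : ∀ g', ∃ β, NChild g g' → WR β (g' ::ₘ D) := by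
      intro g'
      by_cases hc : NChild g g'
      · obtain ⟨β, hβ⟩ := ih g' hc
        exact ⟨β, fun _ => hβ⟩
      · exact ⟨0, fun h => absurd h hc⟩
    choose β hβ using this
    refine ⟨Order.succ (⨆ g', β g'), WR.movY β hm he (fun g' => ?_) hβ⟩
    exact Order.lt_succ_of_le (Ordinal.le_iSup β g')

/-- Rank of a disjunctive state. -/
noncomputable def rkD (D : DState) : Ordinal.{0} := sInf {α | WR α D}

/-- A good choice of a game state. -/
def GoodAt (D : DState) (g : NState) : Prop :=
  ¬ g.elem ∧ ∃ D', D = g ::ₘ D' ∧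
    ((g.myTurn ∧ ∃ g', NChild g g' ∧ ∃ β < rkD D, WR β (g' ::ₘ D')) ∨
     (g.myTurn ∧ ∃ β < rkD D, WR β (g ::ₘ g ::ₘ D')) ∨
     (¬ g.myTurn ∧ ∀ g', NChild g g' → ∃ β < rkD D, WR β (g' ::ₘ D')))

theorem exists_good {α} {D : DState} (h : WR α D) (hD : ¬ DElem D) : ∃ g, GoodAt D g := by
  have hr : WR (rkD D) D := csInf_mem (s := {α | WR α D}) ⟨α, h⟩
  generalize hk : rkD D = k at hr
  cases hr with
  | leaf h1 _ => exact absurd h1 hD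
  | @movI _ β D' g g' hβ hm hc hw =>
    exact ⟨g, fun he => elem_not_my he hm, D', rfl, Or.inl ⟨hm, g', hc, β, hk ▸ hβ, hw⟩⟩
  | @dup _ β D' g hβ hm hw =>
    exact ⟨g, fun he => elem_not_my he hm, D', rfl, Or.inr (Or.inl ⟨hm, β, hk ▸ hβ, hw⟩)⟩
  | @movY _ D' g β hm he hβ hw =>
    exact ⟨g, he, D', rfl, Or.inr (Or.inr ⟨hm, fun g' hg' => ⟨β g', hk ▸ hβ g', hw g' hg'⟩⟩)⟩

open Classical in
/-- The regulation picking rank-decreasing states. -/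
noncomputable def theReg (D : DState) : NState :=
  if h : ∃ g, GoodAt D g then h.choose
  else if h : ∃ g, g ∈ D ∧ ¬ g.elem then h.choose
  else .glob .pro (.prop 0)

theorem theReg_isReg : IsRegulation theReg := by
  intro D hD
  unfold theReg
  split_ifs with h h'
  · obtain ⟨h1, D', h2, _⟩ := h.choose_spec
    have hmem : ∀ a : NState, D = a ::ₘ D' → a ∈ D := by
      rintro a rfl
      exact Multiset.mem_cons_self _ _
    exact ⟨hmem _ h2, h1⟩
  · exact h'.choose_spec
  · exfalso
    apply hD
    intro s hs
    by_contra hc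
    exact h' ⟨s, hs, hc⟩

theorem WR_wins (α : Ordinal.{0}) : ∀ D, WR α D → DWins theReg D := by
  induction α using WellFoundedLT.induction with
  | ind α IH =>
  intro D hw
  by_cases hD : DElem D
  · cases hw with
    | leaf h1 h2 => exact DWins.leaf h1 h2
    | movI _ hm _ _ => exact absurd hm (elem_not_my (hD _ (Multiset.mem_cons_self _ _)))
    | dup _ hm _ => exact absurd hm (elem_not_my (hD _ (Multiset.mem_cons_self _ _)))
    | movY _ _ he _ _ => exact absurd (hD _ (Multiset.mem_cons_self _ _)) he
  · have hg := exists_good hw hD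
    have hle : rkD D ≤ α := csInf_le' hw
    have hr : theReg D = hg.choose := dif_pos hg
    obtain ⟨h1, D', h2, h3⟩ := hg.choose_spec
    rw [← hr] at h1 h2 h3
    generalize theReg D = g at h1 h2 h3 hr
    have hρ : theReg (g ::ₘ D') = g := by
      rw [← h2, dif_pos hg |> (fun e : theReg D = hg.choose => e), hr]
    rcases h3 with ⟨hm, g', hc, β, hβ, hw'⟩ | ⟨hm, β, hβ, hw'⟩ | ⟨hm, hall⟩
    · rw [h2]; exact DWins.movI hρ hm hc (IH β (hβ.trans_le hle) _ hw')
    · rw [h2]; exact DWins.dup hρ hm (IH β (hβ.trans_le hle) _ hw')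
    · rw [h2]
      refine DWins.movY hρ hm h1 (fun g' hg' => ?_)
      obtain ⟨β, hβ, hw'⟩ := hall g' hg'
      exact IH β (hβ.trans_le hle) _ hw'

theorem ren_fun_id (φ : Form) : φ.ren (fun i => i) = φ := by
  induction φ <;> simp_all [Form.ren]

/-! Converse direction. -/

theorem fresh_form (φ : Form) : ∃ b, ∀ k, b ≤ k → ¬ Form.occursF k φ := by
  induction φ with
  | prop p => exact ⟨0, fun k _ h => h⟩
  | nom i => exact ⟨i + 1, fun k hk h => by simp only [Form.occursF] at h; omega⟩
  | rel i j => exact ⟨i + j + 1, fun k hk h => by simp only [Form.occursF] at h; omega⟩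
  | and φ ψ h1 h2 | or φ ψ h1 h2 | imp φ ψ h1 h2 =>
    obtain ⟨a, ha⟩ := h1
    obtain ⟨b, hb⟩ := h2
    refine ⟨a + b, fun k hk h => ?_⟩
    rcases h with h | h
    · exact ha k (by omega) h
    · exact hb k (by omega) h
  | neg φ h | box φ h | dia φ h => exact h
  | at_ i φ h =>
    obtain ⟨a, ha⟩ := h
    refine ⟨a + i + 1, fun k hk h => ?_⟩
    rcases h with h | h
    · omega
    · exact ha k (by omega) h

/-- Pairs as labelled formulas. -/
def toL (p : ℕ × Form) : LForm := .lab p.1 p.2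

/-- Pairs as game states. -/
def toN (r : Role) (p : ℕ × Form) : NState := .loc r p.1 p.2

theorem fresh_ms (Γ : Multiset (ℕ × Form)) :
    ∃ b, ∀ k, b ≤ k → ∀ f ∈ Γ.map toL, ¬ LForm.occursL k f := by
  induction Γ using Multiset.induction with
  | empty => exact ⟨0, by simp⟩
  | cons p Γ ih =>
    obtain ⟨a, ha⟩ := ih
    obtain ⟨b, hb⟩ := fresh_form p.2
    refine ⟨a + b + p.1 + 1, fun k hk f hf => ?_⟩
    rw [Multiset.map_cons, Multiset.mem_cons] at hf
    rcases hf with rfl | hf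
    · rintro (h | h)
      · omega
      · exact hb k (by omega) h
    · exact ha k (by omega) f hf

theorem fresh_all (Γ Δ : Multiset (ℕ × Form)) (i : ℕ) (φ : Form) :
    ∃ j, (∀ f ∈ Γ.map toL, ¬ LForm.occursL j f) ∧ (∀ f ∈ Δ.map toL, ¬ LForm.occursL j f) ∧
      j ≠ i ∧ ¬ Form.occursF j φ := by
  obtain ⟨a, ha⟩ := fresh_ms Γ
  obtain ⟨b, hb⟩ := fresh_ms Δ
  obtain ⟨c, hc⟩ := fresh_form φ
  exact ⟨a + b + c + i + 1, ha _ (by omega), hb _ (by omega), by omega, hc _ (by omega)⟩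

theorem cons_split {g : NState} {D0 : DState} {Γ Δ : Multiset (ℕ × Form)}
    (e : g ::ₘ D0 = Γ.map (toN .opp) + Δ.map (toN .pro)) :
    (∃ i φ Γ', Γ = (i, φ) ::ₘ Γ' ∧ g = .loc .opp i φ ∧
      D0 = Γ'.map (toN .opp) + Δ.map (toN .pro)) ∨
    (∃ i φ Δ', Δ = (i, φ) ::ₘ Δ' ∧ g = .loc .pro i φ ∧
      D0 = Γ.map (toN .opp) + Δ'.map (toN .pro)) := by
  have hg : g ∈ Γ.map (toN .opp) + Δ.map (toN .pro) := e ▸ Multiset.mem_cons_self _ _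
  rcases Multiset.mem_add.1 hg with h | h
  · obtain ⟨⟨i, φ⟩, hp, rfl⟩ := Multiset.mem_map.1 h
    obtain ⟨Γ', rfl⟩ := Multiset.exists_cons_of_mem hp
    refine Or.inl ⟨i, φ, Γ', rfl, rfl, ?_⟩
    rwa [Multiset.map_cons, Multiset.cons_add, Multiset.cons_inj_right] at e
  · obtain ⟨⟨i, φ⟩, hp, rfl⟩ := Multiset.mem_map.1 h
    obtain ⟨Δ', rfl⟩ := Multiset.exists_cons_of_mem hp
    refine Or.inr ⟨i, φ, Δ', rfl, rfl, ?_⟩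
    rwa [Multiset.map_cons, Multiset.add_cons, Multiset.cons_inj_right] at e

theorem IWinsN_elem {M : Model} {s : NState} (h : IWinsN M s) (he : s.elem) : elemIWin M s := by
  cases h with
  | leaf _ h => exact h
  | move hm _ _ => exact absurd hm (elem_not_my he)
  | resp _ h _ => exact absurd he h

theorem elemF_of {φ : Form} (h : φ.elem) : φ.elemF := by
  cases φ <;> simp_all [Form.elemF, Form.elem]

/-- Sequent provability for pairs. -/
def DSP (Γ Δ : Multiset (ℕ × Form)) : Prop := DS (Γ.map toL) (Δ.map toL)

theorem DWins_to_DS {ρ : DState → NState} {D : DState} (h : DWins ρ D) :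
    ∀ Γ Δ : Multiset (ℕ × Form), D = Γ.map (toN .opp) + Δ.map (toN .pro) →
      DS (Γ.map toL) (Δ.map toL) := by
  induction h with
  | leaf h1 h2 =>
    intro Γ Δ e
    subst e
    refine DS.V ?_ ?_ ?_
    · intro f hf
      obtain ⟨p, hp, rfl⟩ := Multiset.mem_map.1 hf
      exact elemF_of (h1 (toN .opp p) (Multiset.mem_add.2 (Or.inl (Multiset.mem_map_of_mem _ hp))))
    · intro f hf
      obtain ⟨p, hp, rfl⟩ := Multiset.mem_map.1 hf
      exact elemF_of (h1 (toN .pro p) (Multiset.mem_add.2 (Or.inr (Multiset.mem_map_of_mem _ hp))))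
    · intro M hM
      obtain ⟨s, hs, hw⟩ := h2 M hM
      have hw := IWinsN_elem hw (h1 s hs)
      rcases Multiset.mem_add.1 hs with h | h
      · obtain ⟨p, hp, rfl⟩ := Multiset.mem_map.1 h
        exact Or.inr ⟨p.1, p.2, Multiset.mem_map_of_mem toL hp, hw⟩
      · obtain ⟨p, hp, rfl⟩ := Multiset.mem_map.1 h
        exact Or.inl ⟨p.1, p.2, Multiset.mem_map_of_mem toL hp, hw⟩
  | @movI D0 g g' _ hm hc _ ih =>
    intro Γ Δ e
    rcases cons_split e with ⟨i, φ, Γ', rfl, rfl, rfl⟩ | ⟨i, φ, Δ', rfl, rfl, rfl⟩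
    · have ihL : ∀ j ψ, g' = .loc .opp j ψ → DS (.lab j ψ ::ₘ Γ'.map toL) (Δ.map toL) := by
        intro j ψ e
        simpa [toL] using ih ((j, ψ) ::ₘ Γ') Δ (by simp [e, toN])
      rw [Multiset.map_cons]
      simp only [toL]
      cases hc
      case andL => exact DS.Land1 (ihL _ _ rfl)
      case andR => exact DS.Land2 (ihL _ _ rfl)
      case box => exact DS.Lbox (ihL _ _ rfl)
      all_goals simp [NState.myTurn] at hm
    · have ihL : ∀ j ψ, g' = .loc .opp j ψ → DS (.lab j ψ ::ₘ Γ.map toL) (Δ'.map toL) := by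
        intro j ψ e
        simpa [toL] using ih ((j, ψ) ::ₘ Γ) Δ' (by simp [e, toN])
      have ihR : ∀ j ψ, g' = .loc .pro j ψ → DS (Γ.map toL) (.lab j ψ ::ₘ Δ'.map toL) := by
        intro j ψ e
        simpa [toL] using ih Γ ((j, ψ) ::ₘ Δ') (by simp [e, toN])
      rw [Multiset.map_cons]
      simp only [toL]
      cases hc
      case orL => exact DS.Ror1 (ihR _ _ rfl)
      case orR => exact DS.Ror2 (ihR _ _ rfl)
      case impL => exact DS.Rimp1 (ihL _ _ rfl)
      case impR => exact DS.Rimp2 (ihR _ _ rfl)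
      case neg => exact DS.Rneg (ihL _ _ rfl)
      case at_ => exact DS.Rat (ihR _ _ rfl)
      case dia => exact DS.Rdia (ihR _ _ rfl)
      all_goals simp [NState.myTurn] at hm
  | @dup D0 g _ hm _ ih =>
    intro Γ Δ e
    rcases cons_split e with ⟨i, φ, Γ', rfl, rfl, rfl⟩ | ⟨i, φ, Δ', rfl, rfl, rfl⟩
    · have := ih ((i, φ) ::ₘ (i, φ) ::ₘ Γ') Δ (by simp [toN])
      simp only [Multiset.map_cons] at this ⊢
      exact DS.CL this
    · have := ih Γ ((i, φ) ::ₘ (i, φ) ::ₘ Δ') (by simp [toN])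
      simp only [Multiset.map_cons] at this ⊢
      exact DS.CR this
  | @movY D0 g _ hm he _ ih =>
    intro Γ Δ e
    rcases cons_split e with ⟨i, φ, Γ', rfl, rfl, rfl⟩ | ⟨i, φ, Δ', rfl, rfl, rfl⟩
    · have ihL : ∀ j ψ, NChild (.loc .opp i φ) (.loc .opp j ψ) →
          DS (.lab j ψ ::ₘ Γ'.map toL) (Δ.map toL) := by
        intro j ψ hc
        simpa [toL] using ih _ hc ((j, ψ) ::ₘ Γ') Δ (by simp [toN])
      have ihR : ∀ j ψ, NChild (.loc .opp i φ) (.loc .pro j ψ) →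
          DS (Γ'.map toL) (.lab j ψ ::ₘ Δ.map toL) := by
        intro j ψ hc
        simpa [toL] using ih _ hc Γ' ((j, ψ) ::ₘ Δ) (by simp [toN])
      rw [Multiset.map_cons]
      simp only [toL]
      cases φ with
      | or φ ψ => exact DS.Lor (ihL _ _ (.orL _ _ _ _)) (ihL _ _ (.orR _ _ _ _))
      | imp φ ψ => exact DS.Limp (ihR _ _ (.impL .opp _ _ _)) (ihL _ _ (.impR _ _ _ _))
      | neg φ => exact DS.Lneg (ihR _ _ (.neg .opp _ _))
      | at_ j φ => exact DS.Lat (ihL _ _ (.at_ _ _ _ _))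
      | dia φ =>
        obtain ⟨j, h1, h2, h3, h4⟩ := fresh_all Γ' Δ i φ
        exact DS.Ldia h1 h2 h3 h4 (ihL _ _ (.dia _ _ _ _))
      | _ => simp [NState.myTurn, NState.elem, Form.elem] at hm he
    · have ihR : ∀ j ψ, NChild (.loc .pro i φ) (.loc .pro j ψ) →
          DS (Γ.map toL) (.lab j ψ ::ₘ Δ'.map toL) := by
        intro j ψ hc
        simpa [toL] using ih _ hc Γ ((j, ψ) ::ₘ Δ') (by simp [toN])
      rw [Multiset.map_cons]
      simp only [toL]
      cases φ with
      | and φ ψ => exact DS.Rand (ihR _ _ (.andL _ _ _ _)) (ihR _ _ (.andR _ _ _ _))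
      | box φ =>
        obtain ⟨j, h1, h2, h3, h4⟩ := fresh_all Γ Δ' i φ
        exact DS.Rbox h1 h2 h3 h4 (ihR _ _ (.box _ _ _ _))
      | _ => simp [NState.myTurn, NState.elem, Form.elem] at hm he

theorem cons_sing {g a : NState} {D : DState} (e : g ::ₘ D = {a}) : g = a ∧ D = 0 := by
  rw [← Multiset.cons_zero] at e
  rcases Multiset.cons_eq_cons.1 e with h | ⟨_, C, _, h⟩
  · exact h
  · exact absurd h.symm (Multiset.cons_ne_zero)

theorem glob_inv {ρ : DState → NState} {D : DState} (h : DWins ρ D) (φ : Form)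
    (e : D = {NState.glob .pro φ}) (i : ℕ) : DWins ρ {NState.loc .pro i φ} := by
  cases h with
  | leaf h1 _ => exact (h1 (NState.glob .pro φ) (by simp [e])).elim
  | movI _ hm _ _ =>
    obtain ⟨rfl, rfl⟩ := cons_sing e
    exact hm.elim
  | dup _ hm _ =>
    obtain ⟨rfl, rfl⟩ := cons_sing e
    exact hm.elim
  | movY _ _ _ hall =>
    obtain ⟨rfl, rfl⟩ := cons_sing e
    exact hall _ (NChild.glob _ _ i)

/-- (Proposition 3) `⊢ φ` is provable in `DS` iff the disjunctive state `P : φ` is winning. -/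
theorem ds_provable_iff_winning (φ : Form) :
    DS 0 {LForm.plain φ} ↔ Winning {NState.glob .pro φ} := by
  constructor
  · intro h
    have hw := DS_to_WW h (fun i => i)
    have e : trS (fun i => i) 0 {LForm.plain φ} = {NState.glob .pro φ} := by
      simp [trS, trL, ren_fun_id]
    rw [e] at hw
    obtain ⟨α, hα⟩ := hw.toWR
    exact ⟨theReg, theReg_isReg, WR_wins α _ hα⟩
  · rintro ⟨ρ, _, h⟩
    obtain ⟨b, hb⟩ := fresh_form φ
    have h1 := glob_inv h φ rfl b
    have h2 := DWins_to_DS h1 0 {(b, φ)} (by simp [toN])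
    exact DS.U (hb b le_rfl) (by simpa [toL] using h2)
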